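/- In a consecutive transition, a moving label whose movement is non-diagonal (its start and end positions share an edge) overlaps at most 12 other labels during the entire transition. -/

import Mathlib

open Set

/-- The closed axis-aligned unit square with lower-left corner `a`. -/
def unitSq (a : ℝ × ℝ) : Set (ℝ × ℝ) :=
  Set.Icc a.1 (a.1 + 1) ×ˢ Set.Icc a.2 (a.2 + 1)

/-- Two unit squares, given by their lower-left corners, overlap if their interiors intersect. -/
def Overlap (a b : ℝ × ℝ) : Prop :=
  (interior (unitSq a) ∩ interior (unitSq b)).Nonempty

/-- `a` is the lower-left corner of one of the four candidate positions of point `p`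
(the four closed unit squares having `p` as a corner). -/
def IsCandidate (p a : ℝ × ℝ) : Prop :=
  a = p ∨ a = (p.1 - 1, p.2) ∨ a = (p.1, p.2 - 1) ∨ a = (p.1 - 1, p.2 - 1)

/-- Two unit squares (given by lower-left corners) share an edge. -/
def SharesEdge (a b : ℝ × ℝ) : Prop :=
  (a.1 = b.1 ∧ (a.2 - b.2 = 1 ∨ b.2 - a.2 = 1)) ∨
  (a.2 = b.2 ∧ (a.1 - b.1 = 1 ∨ b.1 - a.1 = 1))

/-- A movement of the unit-square label of point `p` from candidate position `S` to candidate
position `E`.  If `S` and `E` share an edge (a non-diagonal movement) we set `I = E` and the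
label translates directly from `S` to `E`; if `S` and `E` are diagonally opposite (a diagonal
movement) the label translates through the specified intermediate candidate position `I`,
which shares an edge with both `S` and `E`. -/
structure Movement where
  p : ℝ × ℝ
  S : ℝ × ℝ
  I : ℝ × ℝ
  E : ℝ × ℝ
  candS : IsCandidate p S
  candI : IsCandidate p I
  candE : IsCandidate p E
  legs : (I = E ∧ SharesEdge S E) ∨
    (SharesEdge S I ∧ SharesEdge I E ∧ S.1 ≠ E.1 ∧ S.2 ≠ E.2)

/-- A movement is diagonal if the start and end positions are diagonally opposite
(equivalently, the intermediate position differs from the end position). -/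
def Movement.Diagonal (m : Movement) : Prop := m.I ≠ m.E

/-- Position (lower-left corner) of a moving label at time `t` after the start of its movement:
unit-speed axis-aligned translation, one unit of time per axis-aligned leg; the label rests at
its start position before the movement begins and at its end position after it is finished. -/
noncomputable def Movement.pos (m : Movement) (t : ℝ) : ℝ × ℝ :=
  if t ≤ 0 then m.S
  else if t ≤ 1 then m.S + t • (m.I - m.S)
  else if t ≤ 2 then m.I + (t - 1) • (m.E - m.I)
  else m.E

/-- Duration of a movement: one unit of time per axis-aligned translation. -/
noncomputable def Movement.dur (m : Movement) : ℝ := if m.I = m.E then 1 else 2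

/-- A transition instance: finitely many stationary labels (given by their lower-left corners)
and `n` moving labels, each with a prescribed movement, such that the labeling `L₁` formed by
the stationary labels together with the start positions of the moving labels is overlap-free,
and the labeling `L₂` formed by the stationary labels together with the end positions of the
moving labels is overlap-free. -/
structure TransitionInstance (k n : ℕ) where
  stat : Fin k → ℝ × ℝ
  mov : Fin n → Movement
  free_start : ∀ a b : Fin k ⊕ Fin n, a ≠ b →
    ¬ Overlap (Sum.elim stat (fun j => (mov j).S) a)
      (Sum.elim stat (fun j => (mov j).S) b)
  free_end : ∀ a b : Fin k ⊕ Fin n, a ≠ b →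
    ¬ Overlap (Sum.elim stat (fun j => (mov j).E) a)
      (Sum.elim stat (fun j => (mov j).E) b)

/-- A schedule `τ` of starting times is consecutive if the execution intervals of the movements
are pairwise non-overlapping, i.e. the movements are executed one after another in some order. -/
def Consecutive {k n : ℕ} (T : TransitionInstance k n) (τ : Fin n → ℝ) : Prop :=
  ∀ i j : Fin n, i ≠ j →
    τ i + (T.mov i).dur ≤ τ j ∨ τ j + (T.mov j).dur ≤ τ i

/-- Position (lower-left corner) of each label at global time `t`, when moving label `j`
starts its movement at time `τ j`; stationary labels never move. -/
noncomputable def traj {k n : ℕ} (T : TransitionInstance k n) (τ : Fin n → ℝ) (t : ℝ) :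
    Fin k ⊕ Fin n → ℝ × ℝ :=
  Sum.elim T.stat (fun j => (T.mov j).pos (t - τ j))

/-- The number of overlaps during the transition: the number of unordered pairs of distinct
labels whose interiors intersect at some moment. -/
noncomputable def overlapCount {k n : ℕ} (T : TransitionInstance k n) (τ : Fin n → ℝ) : ℕ :=
  Set.ncard {q : Sym2 (Fin k ⊕ Fin n) | ∃ a b : Fin k ⊕ Fin n,
    q = s(a, b) ∧ a ≠ b ∧ ∃ t : ℝ, Overlap (traj T τ t a) (traj T τ t b)}

/-- Coordinate form of overlap. -/
theorem overlap_iff (a b : ℝ × ℝ) :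
    Overlap a b ↔ |a.1 - b.1| < 1 ∧ |a.2 - b.2| < 1 := by
  unfold Overlap unitSq
  rw [interior_prod_eq, interior_prod_eq, interior_Icc, interior_Icc, interior_Icc, interior_Icc]
  simp only [abs_lt]
  constructor
  · rintro ⟨⟨x, y⟩, ⟨⟨h1, h2⟩, h3, h4⟩, ⟨h5, h6⟩, h7, h8⟩
    simp only at *
    refine ⟨⟨?_, ?_⟩, ?_, ?_⟩ <;> linarith
  · rintro ⟨⟨h1, h2⟩, h3, h4⟩
    refine ⟨((a.1 + b.1 + 1) / 2, (a.2 + b.2 + 1) / 2), ⟨⟨?_, ?_⟩, ?_, ?_⟩, ⟨?_, ?_⟩, ?_, ?_⟩ <;>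
      simp only <;> linarith

/-- Overlap in transformed coordinates. -/
def Ov (a b : ℝ × ℝ) : Prop :=
  (-1 < a.1 - b.1 ∧ a.1 - b.1 < 1) ∧ (-1 < a.2 - b.2 ∧ a.2 - b.2 < 1)

/-- Horizontal slots; `true` is for start positions, `false` for end positions. -/
def hSlot : Bool → Fin 3 → ℝ → Prop
  | true, 0, u => -2 < u ∧ u ≤ -1
  | true, 1, u => 1 ≤ u ∧ u < 2
  | true, 2, u => 2 ≤ u ∧ u < 3
  | false, 0, u => -2 < u ∧ u ≤ -1
  | false, 1, u => -1 < u ∧ u ≤ 0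
  | false, 2, u => 2 ≤ u ∧ u < 3

/-- Vertical slots. -/
def vSlot : Bool → ℝ → Prop
  | true, v => 0 ≤ v ∧ v < 1
  | false, v => -1 < v ∧ v < 0

/-- A label with start `s` and end `e` occupies slot `c`. -/
def Occ (s e : ℝ × ℝ) (c : Bool × Fin 3 × Bool) : Prop :=
  hSlot c.1 c.2.1 (cond c.1 s e).1 ∧ vSlot c.2.2 (cond c.1 s e).2

theorem slot_ov (b : Bool) (i : Fin 3) (w : Bool) (P Q : ℝ × ℝ)
    (h1 : hSlot b i P.1) (h2 : vSlot w P.2) (h3 : hSlot b i Q.1) (h4 : vSlot w Q.2) : Ov P Q := by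
  have hu : -1 < P.1 - Q.1 ∧ P.1 - Q.1 < 1 := by
    cases b <;> fin_cases i <;> simp only [hSlot] at h1 h3 <;> constructor <;> linarith [h1.1, h1.2, h3.1, h3.2]
  have hv : -1 < P.2 - Q.2 ∧ P.2 - Q.2 < 1 := by
    cases w <;> simp only [vSlot] at h2 h4 <;> constructor <;> linarith [h2.1, h2.2, h4.1, h4.2]
  exact ⟨hu, hv⟩

theorem occ_mk (s e : ℝ × ℝ) (b : Bool) (i : Fin 3) (h : hSlot b i (cond b s e).1)
    (h1 : -1 < (cond b s e).2) (h2 : (cond b s e).2 < 1) : ∃ c, Occ s e c := by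
  rcases le_or_gt 0 (cond b s e).2 with h0 | h0
  · exact ⟨(b, i, true), h, h0, h2⟩
  · exact ⟨(b, i, false), h, h1, h0⟩

/-- Start position overlaps the swept rectangle. -/
theorem occ_start (s e : ℝ × ℝ) (l : ℝ) (h0 : 0 ≤ l) (h1 : l ≤ 1)
    (hs : ¬ Ov s (0, 0)) (h : Ov s (l, 0)) : ∃ c, Occ s e c := by
  obtain ⟨⟨a1, a2⟩, a3, a4⟩ := h
  simp only [Ov] at *
  refine occ_mk s e true 1 ⟨?_, ?_⟩ ?_ ?_ <;> simp only [cond]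
  · by_contra hc
    exact hs ⟨⟨by linarith, by linarith⟩, by linarith, by linarith⟩
  all_goals linarith

/-- End position overlaps the swept rectangle. -/
theorem occ_end (s e : ℝ × ℝ) (l : ℝ) (h0 : 0 ≤ l) (h1 : l ≤ 1)
    (he : ¬ Ov e (1, 0)) (h : Ov e (l, 0)) : ∃ c, Occ s e c := by
  obtain ⟨⟨a1, a2⟩, a3, a4⟩ := h
  simp only [Ov] at *
  refine occ_mk s e false 1 ⟨?_, ?_⟩ ?_ ?_ <;> simp only [cond]
  · linarith
  · by_contra hc
    exact he ⟨⟨by linarith, by linarith⟩, by linarith, by linarith⟩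
  all_goals linarith

/-- The intermediate position of a diagonal movement overlaps the start position. -/
theorem occ_mid_start (s m e : ℝ × ℝ) (h1 : SharesEdge s m) (h2 : SharesEdge m e)
    (hd1 : s.1 ≠ e.1) (hd2 : s.2 ≠ e.2)
    (hs : ¬ Ov s (0, 0)) (he : ¬ Ov e (1, 0)) (he' : ¬ Ov e (0, 0)) (h : Ov m (0, 0)) :
    ∃ c, Occ s e c := by
  obtain ⟨⟨a1, a2⟩, a3, a4⟩ := h
  simp only [Ov] at *
  rcases h1 with ⟨h1, h1'⟩ | ⟨h1, h1' | h1'⟩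
  · rcases h2 with ⟨h2, h2'⟩ | ⟨h2, h2' | h2'⟩
    · exact absurd (h1.trans h2) hd1
    · have : m.1 ≤ 0 := by
        by_contra hc
        exact he' ⟨⟨by linarith, by linarith⟩, by linarith, by linarith⟩
      refine occ_mk s e false 0 ⟨?_, ?_⟩ ?_ ?_ <;> simp only [cond] <;> linarith
    · exact absurd ⟨⟨by linarith, by linarith⟩, by linarith, by linarith⟩ he
  · have : 0 ≤ m.1 := by
      by_contra hc
      exact hs ⟨⟨by linarith, by linarith⟩, by linarith, by linarith⟩
    refine occ_mk s e true 1 ⟨?_, ?_⟩ ?_ ?_ <;> simp only [cond] <;> linarith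
  · have : m.1 ≤ 0 := by
      by_contra hc
      exact hs ⟨⟨by linarith, by linarith⟩, by linarith, by linarith⟩
    refine occ_mk s e true 0 ⟨?_, ?_⟩ ?_ ?_ <;> simp only [cond] <;> linarith

/-- The intermediate position of a diagonal movement overlaps the end position. -/
theorem occ_mid_end (s m e : ℝ × ℝ) (h1 : SharesEdge s m) (h2 : SharesEdge m e)
    (hd1 : s.1 ≠ e.1) (hd2 : s.2 ≠ e.2)
    (hs : ¬ Ov s (0, 0)) (he : ¬ Ov e (1, 0)) (hs' : ¬ Ov s (1, 0)) (h : Ov m (1, 0)) :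
    ∃ c, Occ s e c := by
  obtain ⟨⟨a1, a2⟩, a3, a4⟩ := h
  simp only [Ov] at *
  rcases h1 with ⟨h1, h1'⟩ | ⟨h1, h1' | h1'⟩
  · rcases h2 with ⟨h2, h2'⟩ | ⟨h2, h2' | h2'⟩
    · exact absurd (h1.trans h2) hd1
    · have : m.1 ≤ 1 := by
        by_contra hc
        exact he ⟨⟨by linarith, by linarith⟩, by linarith, by linarith⟩
      refine occ_mk s e false 1 ⟨?_, ?_⟩ ?_ ?_ <;> simp only [cond] <;> linarith
    · have : 1 ≤ m.1 := by
        by_contra hc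
        exact he ⟨⟨by linarith, by linarith⟩, by linarith, by linarith⟩
      refine occ_mk s e false 2 ⟨?_, ?_⟩ ?_ ?_ <;> simp only [cond] <;> linarith
  · have : 1 ≤ m.1 := by
      by_contra hc
      exact hs' ⟨⟨by linarith, by linarith⟩, by linarith, by linarith⟩
    refine occ_mk s e true 2 ⟨?_, ?_⟩ ?_ ?_ <;> simp only [cond] <;> linarith
  · have : m.1 ≤ 1 := by
      by_contra hc
      exact hs' ⟨⟨by linarith, by linarith⟩, by linarith, by linarith⟩
    exact absurd ⟨⟨by linarith, by linarith⟩, by linarith, by linarith⟩ hs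

/-- If a point of a unit leg overlaps a square then so does one of the leg's ends. -/
theorem leg_ov (a b r : ℝ × ℝ) (h : SharesEdge a b) (t : ℝ) (h0 : 0 ≤ t) (h1 : t ≤ 1)
    (ho : Ov (a + t • (b - a)) r) : Ov a r ∨ Ov b r := by
  obtain ⟨⟨a1, a2⟩, a3, a4⟩ := ho
  simp only [Prod.fst_add, Prod.snd_add, Prod.smul_fst, Prod.smul_snd, Prod.fst_sub, Prod.snd_sub,
    smul_eq_mul] at a1 a2 a3 a4
  simp only [Ov]
  by_contra hc
  rw [not_or] at hc
  obtain ⟨c1, c2⟩ := hc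
  rcases h with ⟨e1, e2⟩ | ⟨e1, e2⟩
  · have e0 : b.1 - a.1 = 0 := by linarith
    rw [e0] at a1 a2
    rcases e2 with e2 | e2
    · have e3 : b.2 - a.2 = -1 := by linarith
      rw [e3] at a3 a4
      rcases lt_or_ge 0 (a.2 - r.2) with g | g
      · apply c2
        refine ⟨⟨?_, ?_⟩, ?_, ?_⟩ <;> linarith
      · apply c1
        refine ⟨⟨?_, ?_⟩, ?_, ?_⟩ <;> linarith
    · rw [e2] at a3 a4
      rcases le_or_gt 0 (a.2 - r.2) with g | g
      · apply c1
        refine ⟨⟨?_, ?_⟩, ?_, ?_⟩ <;> linarith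
      · apply c2
        refine ⟨⟨?_, ?_⟩, ?_, ?_⟩ <;> linarith
  · have e0 : b.2 - a.2 = 0 := by linarith
    rw [e0] at a3 a4
    rcases e2 with e2 | e2
    · have e3 : b.1 - a.1 = -1 := by linarith
      rw [e3] at a1 a2
      rcases lt_or_ge 0 (a.1 - r.1) with g | g
      · apply c2
        refine ⟨⟨?_, ?_⟩, ?_, ?_⟩ <;> linarith
      · apply c1
        refine ⟨⟨?_, ?_⟩, ?_, ?_⟩ <;> linarith
    · rw [e2] at a1 a2
      rcases le_or_gt 0 (a.1 - r.1) with g | g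
      · apply c1
        refine ⟨⟨?_, ?_⟩, ?_, ?_⟩ <;> linarith
      · apply c2
        refine ⟨⟨?_, ?_⟩, ?_, ?_⟩ <;> linarith

/-- `q` lies on the path from `s` via `m` to `e`. -/
def OnPath (s m e q : ℝ × ℝ) : Prop :=
  ∃ t : ℝ, 0 ≤ t ∧ t ≤ 1 ∧ (q = s + t • (m - s) ∨ q = m + t • (e - m))

theorem path_ov (s m e q r : ℝ × ℝ)
    (hl : (m = e ∧ SharesEdge s e) ∨ (SharesEdge s m ∧ SharesEdge m e ∧ s.1 ≠ e.1 ∧ s.2 ≠ e.2))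
    (hq : OnPath s m e q) (ho : Ov q r) :
    Ov s r ∨ Ov e r ∨ (Ov m r ∧ SharesEdge s m ∧ SharesEdge m e ∧ s.1 ≠ e.1 ∧ s.2 ≠ e.2) := by
  obtain ⟨t, h0, h1, hq | hq⟩ := hq
  · subst hq
    rcases hl with ⟨rfl, hl⟩ | hl
    · rcases leg_ov _ _ _ hl t h0 h1 ho with h | h
      · exact Or.inl h
      · exact Or.inr (Or.inl h)
    · rcases leg_ov _ _ _ hl.1 t h0 h1 ho with h | h
      · exact Or.inl h
      · exact Or.inr (Or.inr ⟨h, hl⟩)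
  · subst hq
    rcases hl with ⟨rfl, hl⟩ | hl
    · right; left
      simpa using ho
    · rcases leg_ov _ _ _ hl.2.1 t h0 h1 ho with h | h
      · exact Or.inr (Or.inr ⟨h, hl⟩)
      · exact Or.inr (Or.inl h)

theorem occ_path_start (s m e q : ℝ × ℝ)
    (hl : (m = e ∧ SharesEdge s e) ∨ (SharesEdge s m ∧ SharesEdge m e ∧ s.1 ≠ e.1 ∧ s.2 ≠ e.2))
    (hq : OnPath s m e q) (hs : ¬ Ov s (0, 0)) (he : ¬ Ov e (1, 0))
    (ho : Ov q (0, 0)) : ∃ c, Occ s e c := by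
  by_cases he' : Ov e (0, 0)
  · exact occ_end s e 0 le_rfl zero_le_one he he'
  rcases path_ov s m e q _ hl hq ho with h | h | ⟨h, h1, h2, h3, h4⟩
  · exact absurd h hs
  · exact absurd h he'
  · exact occ_mid_start s m e h1 h2 h3 h4 hs he he' h

theorem occ_path_end (s m e q : ℝ × ℝ)
    (hl : (m = e ∧ SharesEdge s e) ∨ (SharesEdge s m ∧ SharesEdge m e ∧ s.1 ≠ e.1 ∧ s.2 ≠ e.2))
    (hq : OnPath s m e q) (hs : ¬ Ov s (0, 0)) (he : ¬ Ov e (1, 0))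
    (ho : Ov q (1, 0)) : ∃ c, Occ s e c := by
  by_cases hs' : Ov s (1, 0)
  · exact occ_start s e 1 zero_le_one le_rfl hs hs'
  rcases path_ov s m e q _ hl hq ho with h | h | ⟨h, h1, h2, h3, h4⟩
  · exact absurd h hs'
  · exact absurd h he
  · exact occ_mid_end s m e h1 h2 h3 h4 hs he hs' h

/-- A symmetry of the plane compatible with all notions. -/
structure PlaneSym (φ : ℝ × ℝ → ℝ × ℝ) : Prop where
  ov : ∀ a b, Overlap a b ↔ Ov (φ a) (φ b)
  lin : ∀ a b (t : ℝ), φ (a + t • (b - a)) = φ a + t • (φ b - φ a)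
  edge : ∀ a b, SharesEdge a b → SharesEdge (φ a) (φ b)
  diag : ∀ a b : ℝ × ℝ, a.1 ≠ b.1 → a.2 ≠ b.2 → (φ a).1 ≠ (φ b).1 ∧ (φ a).2 ≠ (φ b).2

theorem sym_straight (o : ℝ × ℝ) (σ : ℝ) (hσ : σ = 1 ∨ σ = -1) :
    PlaneSym (fun a => (σ * (a.1 - o.1), a.2 - o.2)) := by
  constructor
  · intro a b
    rw [overlap_iff]
    simp only [Ov, abs_lt]
    rcases hσ with rfl | rfl <;> constructor <;> rintro ⟨⟨h1, h2⟩, h3, h4⟩ <;>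
      refine ⟨⟨?_, ?_⟩, ?_, ?_⟩ <;> linarith
  · intro a b t
    ext <;> simp <;> ring
  · intro a b h
    simp only [SharesEdge] at *
    rcases hσ with rfl | rfl <;> rcases h with ⟨h, h' | h'⟩ | ⟨h, h' | h'⟩ <;> grind
  · intro a b h1 h2
    simp only
    rcases hσ with rfl | rfl <;> constructor <;> grind

theorem sym_swap (o : ℝ × ℝ) (σ : ℝ) (hσ : σ = 1 ∨ σ = -1) :
    PlaneSym (fun a => (σ * (a.2 - o.2), a.1 - o.1)) := by
  constructor
  · intro a b
    rw [overlap_iff]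
    simp only [Ov, abs_lt]
    rcases hσ with rfl | rfl <;> constructor <;> rintro ⟨⟨h1, h2⟩, h3, h4⟩ <;>
      refine ⟨⟨?_, ?_⟩, ?_, ?_⟩ <;> linarith
  · intro a b t
    ext <;> simp <;> ring
  · intro a b h
    simp only [SharesEdge] at *
    rcases hσ with rfl | rfl <;> rcases h with ⟨h, h' | h'⟩ | ⟨h, h' | h'⟩ <;> grind
  · intro a b h1 h2
    simp only
    rcases hσ with rfl | rfl <;> constructor <;> grind

theorem exists_sym (s e : ℝ × ℝ) (h : SharesEdge s e) :
    ∃ φ, PlaneSym φ ∧ φ s = (0, 0) ∧ φ e = (1, 0) := by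
  rcases h with ⟨h, h' | h'⟩ | ⟨h, h' | h'⟩
  · refine ⟨_, sym_swap s (-1) (Or.inr rfl), ?_, ?_⟩ <;> ext <;> simp <;> linarith
  · refine ⟨_, sym_swap s 1 (Or.inl rfl), ?_, ?_⟩ <;> ext <;> simp <;> linarith
  · refine ⟨_, sym_straight s (-1) (Or.inr rfl), ?_, ?_⟩ <;> ext <;> simp <;> linarith
  · refine ⟨_, sym_straight s 1 (Or.inl rfl), ?_, ?_⟩ <;> ext <;> simp <;> linarith

theorem pos_before (m : Movement) (t : ℝ) (h : t ≤ 0) : m.pos t = m.S := by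
  simp [Movement.pos, h]

theorem pos_after (m : Movement) (t : ℝ) (h : m.dur ≤ t) : m.pos t = m.E := by
  unfold Movement.dur at h
  unfold Movement.pos
  split_ifs at h with hI
  · rw [if_neg (by linarith)]
    by_cases h1 : t ≤ 1
    · have : t = 1 := le_antisymm h1 h
      subst this
      simp [hI]
    · rw [if_neg h1]
      split_ifs <;> simp [hI]
  · rw [if_neg (by linarith), if_neg (by linarith)]
    by_cases h1 : t ≤ 2
    · have : t = 2 := le_antisymm h1 h
      subst this
      rw [if_pos le_rfl]
      ext <;> simp <;> ring
    · rw [if_neg h1]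

theorem pos_path (m : Movement) (t : ℝ) : OnPath m.S m.I m.E (m.pos t) := by
  unfold Movement.pos
  split_ifs with h0 h1 h2
  · exact ⟨0, le_rfl, zero_le_one, Or.inl (by simp)⟩
  · exact ⟨t, by linarith, h1, Or.inl rfl⟩
  · exact ⟨t - 1, by linarith, by linarith, Or.inr rfl⟩
  · exact ⟨1, zero_le_one, le_rfl, Or.inr (by simp)⟩

theorem pos_line (m : Movement) (hI : m.I = m.E) (t : ℝ) :
    ∃ l : ℝ, 0 ≤ l ∧ l ≤ 1 ∧ m.pos t = m.S + l • (m.E - m.S) := by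
  unfold Movement.pos
  split_ifs with h0 h1 h2
  · exact ⟨0, le_rfl, zero_le_one, by simp⟩
  · exact ⟨t, by linarith, h1, by rw [hI]⟩
  · exact ⟨1, zero_le_one, le_rfl, by simp [hI]⟩
  · exact ⟨1, zero_le_one, le_rfl, by simp⟩

/-- In a consecutive transition, a moving label whose movement is non-diagonal (its start and
end positions share an edge) overlaps at most `12` other labels during the entire transition. -/
theorem consecutive_nondiagonal_degree_le {k n : ℕ} (T : TransitionInstance k n) (τ : Fin n → ℝ)
    (hcons : Consecutive T τ) (j : Fin n) (hnd : (T.mov j).I = (T.mov j).E) :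
    {a : Fin k ⊕ Fin n | a ≠ Sum.inr j ∧
      ∃ t : ℝ, Overlap (traj T τ t a) (traj T τ t (Sum.inr j))}.ncard ≤ 12 := by
  have hedge : SharesEdge (T.mov j).S (T.mov j).E := by
    rcases (T.mov j).legs with h | h
    · exact h.2
    · exact hnd ▸ h.1
  obtain ⟨φ, hφ, hS, hE⟩ := exists_sym _ _ hedge
  set st : Fin k ⊕ Fin n → ℝ × ℝ := Sum.elim T.stat (fun i => (T.mov i).S) with hst
  set en : Fin k ⊕ Fin n → ℝ × ℝ := Sum.elim T.stat (fun i => (T.mov i).E) with hen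
  have key : ∀ a : Fin k ⊕ Fin n, a ≠ Sum.inr j →
      (∃ t : ℝ, Overlap (traj T τ t a) (traj T τ t (Sum.inr j))) →
      ∃ c, Occ (φ (st a)) (φ (en a)) c := by
    rintro a ha ⟨t, ht⟩
    have hs : ¬ Ov (φ (st a)) (0, 0) := by
      rw [← hS, ← hφ.ov]
      exact T.free_start a (Sum.inr j) ha
    have he : ¬ Ov (φ (en a)) (1, 0) := by
      rw [← hE, ← hφ.ov]
      exact T.free_end a (Sum.inr j) ha
    rw [hφ.ov] at ht
    obtain ⟨l, hl0, hl1, hl⟩ := pos_line (T.mov j) hnd (t - τ j)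
    have hφl : φ (traj T τ t (Sum.inr j)) = (l, 0) := by
      change φ ((T.mov j).pos (t - τ j)) = _
      rw [hl, hφ.lin, hS, hE]
      ext <;> simp
    rcases a with a | i
    · rw [hφl] at ht
      exact occ_start _ _ l hl0 hl1 hs ht
    · have hij : i ≠ j := fun h => ha (by rw [h])
      change Ov (φ ((T.mov i).pos (t - τ i))) _ at ht
      by_cases h1 : t - τ i ≤ 0
      · rw [hφl, pos_before _ _ h1] at ht
        exact occ_start _ _ l hl0 hl1 hs ht
      by_cases h2 : (T.mov i).dur ≤ t - τ i
      · rw [hφl, pos_after _ _ h2] at ht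
        exact occ_end _ _ l hl0 hl1 he ht
      have hp : OnPath (φ (T.mov i).S) (φ (T.mov i).I) (φ (T.mov i).E)
          (φ ((T.mov i).pos (t - τ i))) := by
        obtain ⟨r, h0, h1, h | h⟩ := pos_path (T.mov i) (t - τ i)
        · exact ⟨r, h0, h1, Or.inl (by rw [h, hφ.lin])⟩
        · exact ⟨r, h0, h1, Or.inr (by rw [h, hφ.lin])⟩
      have hlegs : (φ (T.mov i).I = φ (T.mov i).E ∧ SharesEdge (φ (T.mov i).S) (φ (T.mov i).E)) ∨
          (SharesEdge (φ (T.mov i).S) (φ (T.mov i).I) ∧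
            SharesEdge (φ (T.mov i).I) (φ (T.mov i).E) ∧
            (φ (T.mov i).S).1 ≠ (φ (T.mov i).E).1 ∧ (φ (T.mov i).S).2 ≠ (φ (T.mov i).E).2) := by
        rcases (T.mov i).legs with h | h
        · exact Or.inl ⟨by rw [h.1], hφ.edge _ _ h.2⟩
        · exact Or.inr ⟨hφ.edge _ _ h.1, hφ.edge _ _ h.2.1, hφ.diag _ _ h.2.2.1 h.2.2.2⟩
      change Ov _ (φ ((T.mov j).pos (t - τ j))) at ht
      rcases hcons i j hij with h | h
      · rw [pos_before (T.mov j) _ (by linarith), hS] at ht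
        exact occ_path_start _ _ _ _ hlegs hp hs he ht
      · rw [pos_after (T.mov j) _ (by linarith), hE] at ht
        exact occ_path_end _ _ _ _ hlegs hp hs he ht
  rw [← Nat.card_coe_set_eq]
  choose f hf using fun x : {a : Fin k ⊕ Fin n | a ≠ Sum.inr j ∧
      ∃ t : ℝ, Overlap (traj T τ t a) (traj T τ t (Sum.inr j))} => key x.1 x.2.1 x.2.2
  have hinj : Function.Injective f := by
    intro x y hxy
    by_contra hne
    have hne' : x.1 ≠ y.1 := fun h => hne (Subtype.ext h)
    have hx := hf x
    have hy := hf y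
    rw [← hxy] at hy
    have := slot_ov _ _ _ _ _ hx.1 hx.2 hy.1 hy.2
    cases hb : (f x).1 <;> rw [hb] at this <;> simp only [cond] at this <;> rw [← hφ.ov] at this
    · exact T.free_end _ _ hne' this
    · exact T.free_start _ _ hne' this
  calc _ ≤ Nat.card (Bool × Fin 3 × Bool) := Nat.card_le_card_of_injective f hinj
    _ = 12 := by simp [Nat.card_eq_fintype_card]
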